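/- arXiv:2002.05394 — 7 statements merged into one kernel-verified Lean document; each statement's English description precedes it below -/
import Mathlib

section
/- There exists a star-algebra homomorphism π : A → B(ℓ²(G,H)) satisfying (π(a) ξ)(s) = u(α(s⁻¹)(a))(ξ(s)) for all a ∈ A, ξ ∈ ℓ²(G,H) and s ∈ G. Moreover ‖π(a)‖ ≤ ‖a‖ for all a ∈ A, and if u is injective then π is isometric: ‖π(a)‖ = ‖a‖ for all a ∈ A. -/
/-!
The family `s ↦ u ∘ α s⁻¹` consists of representations of `A` on `H`, and `π` is its Hilbert sum.
A Hilbert sum of representations exists because star-homomorphisms between C⋆-algebras are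
contractive, which bounds the diagonal operators uniformly. It annihilates `a` exactly when every
summand does, and an injective star-homomorphism between C⋆-algebras is isometric. If `u` is
injective, the summand at `s = 1` is already injective.
-/

open scoped ENNReal

section DiagonalOperator

variable {ι 𝕜 : Type*} {E F : ι → Type*}

theorem lp_mapCLM_eq_zero_iff [NontriviallyNormedField 𝕜]
    [∀ i, NormedAddCommGroup (E i)] [∀ i, NormedSpace 𝕜 (E i)]
    [∀ i, NormedAddCommGroup (F i)] [∀ i, NormedSpace 𝕜 (F i)]
    {p : ℝ≥0∞} [Fact (1 ≤ p)] {T : ∀ i, E i →L[𝕜] F i} {K : ℝ} (hK : 0 ≤ K)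
    (hTK : ∀ i, ‖T i‖ ≤ K) :
    lp.mapCLM p T hK hTK = 0 ↔ ∀ i, T i = 0 := by
  classical
  constructor
  · intro hT i
    ext x
    have hcoord : lp.mapCLM p T hK hTK (lp.single p i x) i = 0 := by rw [hT]; rfl
    simpa using hcoord
  · intro hT
    ext ξ i
    simp [hT]

theorem adjoint_lp_mapCLM [RCLike 𝕜]
    [∀ i, NormedAddCommGroup (E i)] [∀ i, InnerProductSpace 𝕜 (E i)] [∀ i, CompleteSpace (E i)]
    [∀ i, NormedAddCommGroup (F i)] [∀ i, InnerProductSpace 𝕜 (F i)] [∀ i, CompleteSpace (F i)]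
    {T : ∀ i, E i →L[𝕜] F i} {K : ℝ} (hK : 0 ≤ K) (hTK : ∀ i, ‖T i‖ ≤ K) :
    (lp.mapCLM 2 T hK hTK).adjoint =
      lp.mapCLM 2 (fun i => (T i).adjoint) hK (fun i => by simpa using hTK i) := by
  symm
  rw [ContinuousLinearMap.eq_adjoint_iff]
  intro η ξ
  simp only [lp.inner_eq_tsum, lp.mapCLM_apply_coe, ContinuousLinearMap.adjoint_inner_left]

end DiagonalOperator

section HilbertSum

variable {ι : Type*} {H : ι → Type*} [∀ i, NormedAddCommGroup (H i)]
  [∀ i, InnerProductSpace ℂ (H i)] [∀ i, CompleteSpace (H i)] {A : Type*} [CStarAlgebra A]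

/-- The Hilbert sum `⨁ i, ρ i` of a family of representations of a C⋆-algebra, acting diagonally
on the Hilbert sum `lp H 2` of the underlying spaces. -/
noncomputable def hilbertSumRep (ρ : ∀ i, A →⋆ₐ[ℂ] (H i →L[ℂ] H i)) :
    A →⋆ₐ[ℂ] (lp H 2 →L[ℂ] lp H 2) where
  toFun a := lp.mapCLM 2 (fun i => ρ i a) (norm_nonneg a)
    fun i => NonUnitalStarAlgHom.norm_apply_le (ρ i) a
  map_one' := by ext; simp
  map_mul' a b := by ext; simp
  map_zero' := by ext; simp
  map_add' a b := by ext; simp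
  commutes' c := by ext; simp [Algebra.algebraMap_eq_smul_one]
  map_star' a := by
    rw [ContinuousLinearMap.star_eq_adjoint, adjoint_lp_mapCLM]
    ext
    simp [map_star, ContinuousLinearMap.star_eq_adjoint]

theorem hilbertSumRep_apply_apply (ρ : ∀ i, A →⋆ₐ[ℂ] (H i →L[ℂ] H i)) (a : A) (ξ : lp H 2)
    (i : ι) : hilbertSumRep ρ a ξ i = ρ i a (ξ i) :=
  rfl

theorem hilbertSumRep_eq_zero_iff (ρ : ∀ i, A →⋆ₐ[ℂ] (H i →L[ℂ] H i)) {a : A} :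
    hilbertSumRep ρ a = 0 ↔ ∀ i, ρ i a = 0 :=
  lp_mapCLM_eq_zero_iff (norm_nonneg a) fun i => NonUnitalStarAlgHom.norm_apply_le (ρ i) a

theorem norm_hilbertSumRep (ρ : ∀ i, A →⋆ₐ[ℂ] (H i →L[ℂ] H i))
    (hρ : ∀ a, (∀ i, ρ i a = 0) → a = 0) (a : A) : ‖hilbertSumRep ρ a‖ = ‖a‖ := by
  have hinj : Function.Injective (hilbertSumRep ρ) :=
    (injective_iff_map_eq_zero _).2 fun b hb => hρ b ((hilbertSumRep_eq_zero_iff ρ).1 hb)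
  exact NonUnitalStarAlgHom.norm_map (hilbertSumRep ρ) hinj a

theorem stmt_2_general (ρ : ∀ i, A →⋆ₐ[ℂ] (H i →L[ℂ] H i)) :
    ∃ π : A →⋆ₐ[ℂ] (lp H 2 →L[ℂ] lp H 2),
      (∀ (a : A) (ξ : lp H 2) (i : ι), π a ξ i = ρ i a (ξ i)) ∧
      (∀ a : A, ‖π a‖ ≤ ‖a‖) ∧
      ((∀ a : A, (∀ i, ρ i a = 0) → a = 0) → ∀ a : A, ‖π a‖ = ‖a‖) :=
  ⟨hilbertSumRep ρ, hilbertSumRep_apply_apply ρ,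
    NonUnitalStarAlgHom.norm_apply_le (hilbertSumRep ρ), norm_hilbertSumRep ρ⟩

end HilbertSum

theorem stmt_2 {G : Type*} [Group G] {H : Type*} [NormedAddCommGroup H]
    [InnerProductSpace ℂ H] [CompleteSpace H]
    {A : Type*} [NormedRing A] [StarRing A] [CStarRing A] [NormedAlgebra ℂ A]
    [StarModule ℂ A] [CompleteSpace A]
    (u : A →⋆ₐ[ℂ] (H →L[ℂ] H)) (α : G → (A ≃⋆ₐ[ℂ] A))
    (hα : ∀ (g h : G) (a : A), α (g * h) a = α g (α h a)) :
    ∃ π : A →⋆ₐ[ℂ] ((lp (fun _ : G => H) 2) →L[ℂ] (lp (fun _ : G => H) 2)),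
      (∀ (a : A) (ξ : lp (fun _ : G => H) 2) (s : G),
          (π a ξ : ∀ _ : G, H) s = u (α s⁻¹ a) (ξ s)) ∧
      (∀ a : A, ‖π a‖ ≤ ‖a‖) ∧
      (Function.Injective u → ∀ a : A, ‖π a‖ = ‖a‖) := by
  let : CStarAlgebra A := {}
  obtain ⟨π, hπ, hle, hiso⟩ := stmt_2_general fun s : G => u.comp (α s⁻¹ : A →⋆ₐ[ℂ] A)
  exact ⟨π, hπ, hle, fun hu => hiso fun a ha =>
    (map_eq_zero_iff (α 1⁻¹) (α 1⁻¹).injective).1 ((map_eq_zero_iff u hu).1 (ha 1))⟩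
end

section
/- Let G be a group, H a complex Hilbert space, r ∈ G, and d : G → B(H) a family of bounded operators whose norms are bounded above. Then there exists a bounded operator D on ℓ²(G,H) satisfying (D ξ)(p) = d(p)(ξ(r⁻¹ p)) for all ξ ∈ ℓ²(G,H) and p ∈ G, and its norm equals the supremum of the entries: ‖D‖ = ⨆_{p ∈ G} ‖d(p)‖. -/
/-!
The operator factors as the reindexing contraction `ξ ↦ ξ ∘ σ` along the injection
`σ p = r⁻¹ * p`, followed by the diagonal operator with entries `d p`; the latter has norm at most
`⨆ p, ‖d p‖`. Conversely, a vector `v` placed at the single coordinate `σ p` is sent to a family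
whose value at `p` is `d p v`, which bounds every `‖d p‖` by the norm of the operator.
-/

open Function
open scoped ENNReal

section Reindex

variable {α β : Type*} {E : α → Type*} [∀ a, NormedAddCommGroup (E a)] {p : ℝ≥0∞} {σ : β → α}

theorem memℓp_comp_injective {f : ∀ a, E a} (hf : Memℓp f p) (hσ : Injective σ) :
    Memℓp (fun b => f (σ b)) p := by
  obtain (rfl | rfl | hp) := p.trichotomy
  · exact memℓp_zero (hf.finite_dsupport.preimage hσ.injOn)
  · exact memℓp_infty (hf.bddAbove.mono (Set.range_comp_subset_range σ fun a => ‖f a‖))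
  · exact memℓp_gen ((hf.summable hp).comp_injective hσ)

theorem norm_lp_comp_injective_le (hp : p ≠ 0) (hσ : Injective σ) (f : lp E p) :
    ‖(⟨fun b => f (σ b), memℓp_comp_injective (lp.memℓp f) hσ⟩ : lp (fun b => E (σ b)) p)‖
      ≤ ‖f‖ := by
  obtain (rfl | rfl | hp') := p.trichotomy
  · exact absurd rfl hp
  · exact lp.norm_le_of_forall_le (norm_nonneg f) fun b => lp.norm_apply_le_norm hp f (σ b)
  · refine lp.norm_le_of_tsum_le hp' (lp.norm_nonneg' f) ?_
    rw [lp.norm_rpow_eq_tsum hp' f]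
    exact tsum_comp_le_tsum_of_inj ((lp.memℓp f).summable hp') (fun _ => by positivity) hσ

variable (𝕜 : Type*) [NontriviallyNormedField 𝕜] [∀ a, NormedSpace 𝕜 (E a)] [Fact (1 ≤ p)]

/-- The contraction `f ↦ f ∘ σ` between `ℓᵖ` spaces induced by an injective map `σ` of the index
types; it drops the coordinates outside the range of `σ`. -/
noncomputable def lpReindex (hσ : Injective σ) : lp E p →L[𝕜] lp (fun b => E (σ b)) p :=
  LinearMap.mkContinuous
    { toFun := fun f => ⟨fun b => f (σ b), memℓp_comp_injective (lp.memℓp f) hσ⟩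
      map_add' := fun _ _ => rfl
      map_smul' := fun _ _ => rfl }
    1 fun f => (norm_lp_comp_injective_le (zero_lt_one.trans_le Fact.out).ne' hσ f).trans_eq
      (one_mul _).symm

@[simp]
theorem lpReindex_apply (hσ : Injective σ) (f : lp E p) (b : β) :
    lpReindex 𝕜 hσ f b = f (σ b) :=
  rfl

theorem norm_lpReindex_le_one (hσ : Injective σ) :
    ‖(lpReindex 𝕜 hσ : lp E p →L[𝕜] lp (fun b => E (σ b)) p)‖ ≤ 1 :=
  LinearMap.mkContinuous_norm_le _ zero_le_one _

end Reindex

section Diagonal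

variable {β 𝕜 : Type*} [NontriviallyNormedField 𝕜] {E F : β → Type*}
  [∀ b, NormedAddCommGroup (E b)] [∀ b, NormedSpace 𝕜 (E b)]
  [∀ b, NormedAddCommGroup (F b)] [∀ b, NormedSpace 𝕜 (F b)] {p : ℝ≥0∞}

theorem norm_lp_infty_apply_apply_le (d : lp (fun b => E b →L[𝕜] F b) ∞) (f : ∀ b, E b) (b : β) :
    ‖d b (f b)‖ ≤ ‖d‖ * ‖f b‖ :=
  (d b).le_of_opNorm_le (lp.norm_apply_le_norm ENNReal.top_ne_zero d b) (f b)

theorem memℓp_diagonal_apply (d : lp (fun b => E b →L[𝕜] F b) ∞) {f : ∀ b, E b}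
    (hf : Memℓp f p) : Memℓp (fun b => d b (f b)) p :=
  (hf.norm.const_mul ‖d‖).mono (norm_lp_infty_apply_apply_le d f)

theorem norm_lp_diagonal_apply_le (hp : p ≠ 0) (d : lp (fun b => E b →L[𝕜] F b) ∞)
    (f : lp E p) :
    ‖(⟨fun b => d b (f b), memℓp_diagonal_apply d (lp.memℓp f)⟩ : lp F p)‖ ≤ ‖d‖ * ‖f‖ :=
  calc
    _ ≤ ‖‖d‖ • lp.toNorm f‖ :=
      lp.norm_mono hp fun b => (norm_lp_infty_apply_apply_le d f b).trans (Real.le_norm_self _)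
    _ = ‖d‖ * ‖f‖ := by rw [lp.norm_const_smul hp, norm_norm, lp.norm_toNorm]

variable [Fact (1 ≤ p)]

/-- The diagonal operator `f ↦ (d b (f b))_b` on `ℓᵖ`. Uniform boundedness of the entries is encoded
by taking `d` in `ℓ^∞`, so that `‖d‖` is the supremum of the norms of the entries. -/
noncomputable def lpDiagonal (d : lp (fun b => E b →L[𝕜] F b) ∞) : lp E p →L[𝕜] lp F p :=
  LinearMap.mkContinuous
    { toFun := fun f => ⟨fun b => d b (f b), memℓp_diagonal_apply d (lp.memℓp f)⟩
      map_add' := fun f g => lp.ext (funext fun b => map_add (d b) (f b) (g b))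
      map_smul' := fun c f => lp.ext (funext fun b => map_smul (d b) c (f b)) }
    ‖d‖ (norm_lp_diagonal_apply_le (zero_lt_one.trans_le Fact.out).ne' d)

@[simp]
theorem lpDiagonal_apply (d : lp (fun b => E b →L[𝕜] F b) ∞) (f : lp E p) (b : β) :
    lpDiagonal d f b = d b (f b) :=
  rfl

theorem norm_lpDiagonal_le (d : lp (fun b => E b →L[𝕜] F b) ∞) :
    ‖(lpDiagonal d : lp E p →L[𝕜] lp F p)‖ ≤ ‖d‖ :=
  LinearMap.mkContinuous_norm_le _ (norm_nonneg d) _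

end Diagonal

section TwistedDiagonal

variable {α β 𝕜 : Type*} [NontriviallyNormedField 𝕜] {E : α → Type*} {F : β → Type*}
  [∀ a, NormedAddCommGroup (E a)] [∀ a, NormedSpace 𝕜 (E a)]
  [∀ b, NormedAddCommGroup (F b)] [∀ b, NormedSpace 𝕜 (F b)]
  {p : ℝ≥0∞} [Fact (1 ≤ p)] {σ : β → α}

theorem norm_le_opNorm_of_apply_eq {D : lp E p →L[𝕜] lp F p} {a : α} {b : β} {T : E a →L[𝕜] F b}
    (hD : ∀ f : lp E p, D f b = T (f a)) : ‖T‖ ≤ ‖D‖ := by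
  classical
  have hp : 0 < p := zero_lt_one.trans_le Fact.out
  refine T.opNorm_le_bound (norm_nonneg D) fun v => ?_
  calc
    ‖T v‖ = ‖D (lp.single p a v) b‖ := by rw [hD, lp.single_apply_self]
    _ ≤ ‖D (lp.single p a v)‖ := lp.norm_apply_le_norm hp.ne' _ b
    _ ≤ ‖D‖ * ‖lp.single p a v‖ := D.le_opNorm _
    _ = ‖D‖ * ‖v‖ := by rw [lp.norm_single hp]

/-- The twisted diagonal operator `f ↦ (d b (f (σ b)))_b` on `ℓᵖ`, whose matrix is supported on the
graph of the injective map `σ`, with uniformly bounded entries `d`. -/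
noncomputable def lpTwistedDiagonal (hσ : Injective σ) (d : lp (fun b => E (σ b) →L[𝕜] F b) ∞) :
    lp E p →L[𝕜] lp F p :=
  (lpDiagonal d).comp (lpReindex 𝕜 hσ)

@[simp]
theorem lpTwistedDiagonal_apply (hσ : Injective σ) (d : lp (fun b => E (σ b) →L[𝕜] F b) ∞)
    (f : lp E p) (b : β) : lpTwistedDiagonal hσ d f b = d b (f (σ b)) := by
  rw [lpTwistedDiagonal, ContinuousLinearMap.comp_apply, lpDiagonal_apply, lpReindex_apply]

theorem norm_lpTwistedDiagonal (hσ : Injective σ) (d : lp (fun b => E (σ b) →L[𝕜] F b) ∞) :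
    ‖(lpTwistedDiagonal hσ d : lp E p →L[𝕜] lp F p)‖ = ‖d‖ := by
  apply le_antisymm
  · calc
      ‖(lpTwistedDiagonal hσ d : lp E p →L[𝕜] lp F p)‖
        ≤ ‖(lpDiagonal d : lp (fun b => E (σ b)) p →L[𝕜] lp F p)‖ *
            ‖(lpReindex 𝕜 hσ : lp E p →L[𝕜] lp (fun b => E (σ b)) p)‖ :=
          ContinuousLinearMap.opNorm_comp_le _ _
      _ ≤ ‖d‖ * 1 :=
          mul_le_mul (norm_lpDiagonal_le d) (norm_lpReindex_le_one 𝕜 hσ) (norm_nonneg _)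
            (norm_nonneg d)
      _ = ‖d‖ := mul_one _
  · exact lp.norm_le_of_forall_le (norm_nonneg _) fun b =>
      norm_le_opNorm_of_apply_eq fun f => lpTwistedDiagonal_apply hσ d f b

theorem stmt_6_general (hσ : Injective σ) (d : ∀ b, E (σ b) →L[𝕜] F b)
    (hd : BddAbove (Set.range fun b => ‖d b‖)) :
    ∃ D : lp E p →L[𝕜] lp F p,
      (∀ (f : lp E p) (b : β), D f b = d b (f (σ b))) ∧ ‖D‖ = ⨆ b, ‖d b‖ := by
  let d' : lp (fun b => E (σ b) →L[𝕜] F b) ∞ := ⟨d, memℓp_infty hd⟩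
  exact ⟨lpTwistedDiagonal hσ d', lpTwistedDiagonal_apply hσ d',
    (norm_lpTwistedDiagonal hσ d').trans (lp.norm_eq_ciSup d')⟩

end TwistedDiagonal

theorem stmt_6 {G : Type*} [Group G] {H : Type*} [NormedAddCommGroup H]
    [InnerProductSpace ℂ H] [CompleteSpace H]
    (r : G) (d : G → (H →L[ℂ] H))
    (hd : BddAbove (Set.range fun p : G => ‖d p‖)) :
    ∃ D : lp (fun _ : G => H) 2 →L[ℂ] lp (fun _ : G => H) 2,
      (∀ (ξ : lp (fun _ : G => H) 2) (p : G),
        (D ξ : ∀ _ : G, H) p = d p (ξ (r⁻¹ * p))) ∧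
      ‖D‖ = ⨆ p : G, ‖d p‖ :=
  stmt_6_general (E := fun _ : G => H) (F := fun _ : G => H) (mul_right_injective r⁻¹) d hd
end

section
/- Let a : G → A be finitely supported and set x := ∑_{s ∈ supp a} π(a(s)) ∘ λ_s, a bounded operator on ℓ²(G,H). Then for every r ∈ G one has ‖u(a(r))‖ ≤ ‖x‖ (the Fourier coefficients of a finite sum in the crossed product are dominated in norm by the operator norm of the sum). -/
/-!
View an operator on `ℓᵖ(G, H)` as a `G × G` matrix of operators on `H`. The operator `π(a(s)) λ_s`
is supported on the entries `(t, s⁻¹ t)`, and these positions are disjoint for different `s`. Hence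
the `(t, r⁻¹ t)` entry of `∑ s, π(a(s)) λ_s` is exactly `u(α(t⁻¹)(a(r)))`, and the norm of an entry
never exceeds the norm of the matrix. The Fourier coefficient `u(a(r))` is the entry with `t = 1`.
-/

open scoped ENNReal

section MatrixEntries

variable {𝕜 : Type*} [NontriviallyNormedField 𝕜] {p q : ℝ≥0∞} [Fact (1 ≤ p)] [Fact (1 ≤ q)]

theorem norm_le_opNorm_of_apply_single_apply_eq {ι κ : Type*} [DecidableEq ι]
    {E : ι → Type*} [∀ i, NormedAddCommGroup (E i)] [∀ i, NormedSpace 𝕜 (E i)]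
    {F : κ → Type*} [∀ k, NormedAddCommGroup (F k)] [∀ k, NormedSpace 𝕜 (F k)]
    {T : lp E p →L[𝕜] lp F q} {i : ι} {k : κ} {B : E i →L[𝕜] F k}
    (hB : ∀ v, T (lp.single p i v) k = B v) : ‖B‖ ≤ ‖T‖ := by
  have hp : 0 < p := zero_lt_one.trans_le Fact.out
  have hq : q ≠ 0 := (zero_lt_one.trans_le Fact.out).ne'
  refine B.opNorm_le_bound (norm_nonneg T) fun v => ?_
  calc ‖B v‖ = ‖T (lp.single p i v) k‖ := by rw [hB]
    _ ≤ ‖T (lp.single p i v)‖ := lp.norm_apply_le_norm hq _ k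
    _ ≤ ‖T‖ * ‖(lp.single p i v : lp E p)‖ := T.le_opNorm _
    _ = ‖T‖ * ‖v‖ := by rw [lp.norm_single hp]

variable {G : Type*} [Group G] {H K : Type*} [NormedAddCommGroup H] [NormedSpace 𝕜 H]
  [NormedAddCommGroup K] [NormedSpace 𝕜 K]

theorem sum_diagonal_comp_translation_apply_single_apply [DecidableEq G]
    {lam : G → (lp (fun _ : G => H) p →L[𝕜] lp (fun _ : G => H) p)}
    (hlam : ∀ r ξ s, lam r ξ s = ξ (r⁻¹ * s))
    {D : G → (lp (fun _ : G => H) p →L[𝕜] lp (fun _ : G => K) q)} {d : G → G → (H →L[𝕜] K)}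
    (hD : ∀ s ξ t, D s ξ t = d s t (ξ t)) {S : Finset G} {r : G} (hr : r ∈ S) (t : G) (v : H) :
    (∑ s ∈ S, D s ∘L lam s) (lp.single p (r⁻¹ * t) v) t = d r t v := by
  have entry (s : G) : (D s ∘L lam s) (lp.single p (r⁻¹ * t) v) t
      = d s t (lp.single (E := fun _ : G => H) p (r⁻¹ * t) v (s⁻¹ * t)) := by
    rw [ContinuousLinearMap.comp_apply, hD, hlam]
  rw [sum_apply, lp.coeFn_sum, Finset.sum_apply, Finset.sum_eq_single_of_mem r hr]
  · rw [entry, lp.single_apply_self]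
  · intro s _ hsr
    have hne : s⁻¹ * t ≠ r⁻¹ * t := fun h => hsr (inv_injective (mul_right_cancel h))
    rw [entry, lp.single_apply_ne _ _ _ hne, map_zero]

theorem norm_diagonal_le_norm_sum_comp_translation
    {lam : G → (lp (fun _ : G => H) p →L[𝕜] lp (fun _ : G => H) p)}
    (hlam : ∀ r ξ s, lam r ξ s = ξ (r⁻¹ * s))
    {D : G → (lp (fun _ : G => H) p →L[𝕜] lp (fun _ : G => K) q)} {d : G → G → (H →L[𝕜] K)}
    (hD : ∀ s ξ t, D s ξ t = d s t (ξ t)) {S : Finset G} {r : G} (hr : r ∈ S) (t : G) :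
    ‖d r t‖ ≤ ‖∑ s ∈ S, D s ∘L lam s‖ := by
  classical
  exact norm_le_opNorm_of_apply_single_apply_eq (E := fun _ : G => H) (F := fun _ : G => K)
    (sum_diagonal_comp_translation_apply_single_apply hlam hD hr t)

end MatrixEntries

theorem apply_one_eq_self_of_map_mul {M X : Type*} [MulOneClass M] {α : M → X → X}
    (hα : ∀ g h x, α (g * h) x = α g (α h x)) (hinj : Function.Injective (α 1)) (x : X) :
    α 1 x = x :=
  hinj (by rw [← hα, one_mul])

theorem stmt_8_general {𝕜 : Type*} [NontriviallyNormedField 𝕜] {p : ℝ≥0∞} [Fact (1 ≤ p)]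
    {G : Type*} [Group G] {H : Type*} [NormedAddCommGroup H] [NormedSpace 𝕜 H]
    {A : Type*} [Zero A]
    {U : Type*} [FunLike U A (H →L[𝕜] H)] [ZeroHomClass U A (H →L[𝕜] H)] (u : U)
    {V : Type*} [FunLike V A A] [ZeroHomClass V A A] (α : G → V)
    (lam : G → (lp (fun _ : G => H) p →L[𝕜] lp (fun _ : G => H) p))
    (hlam : ∀ r ξ s, lam r ξ s = ξ (r⁻¹ * s))
    (π : A → (lp (fun _ : G => H) p →L[𝕜] lp (fun _ : G => H) p))
    (hπ : ∀ a ξ s, π a ξ s = u (α s⁻¹ a) (ξ s))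
    (a : G →₀ A) (r t : G) :
    ‖u (α t⁻¹ (a r))‖ ≤ ‖∑ s ∈ a.support, π (a s) ∘L lam s‖ := by
  by_cases hr : r ∈ a.support
  · exact norm_diagonal_le_norm_sum_comp_translation (d := fun s t => u (α t⁻¹ (a s))) hlam
      (fun s => hπ (a s)) hr t
  · rw [Finsupp.notMem_support_iff.mp hr, map_zero, map_zero, norm_zero]
    exact norm_nonneg _

theorem stmt_8 {G : Type*} [Group G] {H : Type*} [NormedAddCommGroup H]
    [InnerProductSpace ℂ H] [CompleteSpace H]
    {A : Type*} [NormedRing A] [StarRing A] [CStarRing A] [NormedAlgebra ℂ A]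
    [StarModule ℂ A] [CompleteSpace A]
    (u : A →⋆ₐ[ℂ] (H →L[ℂ] H)) (α : G → (A ≃⋆ₐ[ℂ] A))
    (hα : ∀ (g h : G) (a : A), α (g * h) a = α g (α h a))
    (lam : G → (lp (fun _ : G => H) 2 →L[ℂ] lp (fun _ : G => H) 2))
    (hlam : ∀ (r : G) (ξ : lp (fun _ : G => H) 2) (s : G),
      (lam r ξ : ∀ _ : G, H) s = ξ (r⁻¹ * s))
    (π : A → (lp (fun _ : G => H) 2 →L[ℂ] lp (fun _ : G => H) 2))
    (hπ : ∀ (a : A) (ξ : lp (fun _ : G => H) 2) (s : G),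
      (π a ξ : ∀ _ : G, H) s = u (α s⁻¹ a) (ξ s))
    (a : G →₀ A) :
    ∀ r : G, ‖u (a r)‖ ≤ ‖∑ s ∈ a.support, π (a s) ∘L lam s‖ := by
  intro r
  have hα_one := apply_one_eq_self_of_map_mul (α := fun g => ⇑(α g)) hα (EquivLike.injective (α 1))
  simpa only [inv_one, hα_one] using stmt_8_general u α lam hlam π hπ a r 1
end

section
/- Let H be a complex Hilbert space, F a finite type, a, b, c : F → B(H), and ε ≥ 0 with ‖b(p)‖ ≤ ε for all p ∈ F. Then for all ξ, η ∈ H: |⟪(∑_{p ∈ F} (a(p))* ∘ b(p) ∘ c(p)) ξ, η⟫| ≤ ε · ⟪(∑_{p ∈ F} (c(p))* ∘ c(p)) ξ, ξ⟫^{1/2} · ⟪(∑_{p ∈ F} (a(p))* ∘ a(p)) η, η⟫^{1/2}. Consequently ‖∑_{p ∈ F} (a(p))* ∘ b(p) ∘ c(p)‖ ≤ ε · ‖∑_{p ∈ F} (c(p))* ∘ c(p)‖^{1/2} · ‖∑_{p ∈ F} (a(p))* ∘ a(p)‖^{1/2}. -/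
open scoped InnerProductSpace

section

open ContinuousLinearMap

variable {𝕜 E G : Type*} [RCLike 𝕜]
  [NormedAddCommGroup E] [InnerProductSpace 𝕜 E] [NormedAddCommGroup G] [InnerProductSpace 𝕜 G]

theorem re_inner_map_self_le (T : E →L[𝕜] E) (x : E) :
    RCLike.re ⟪T x, x⟫_𝕜 ≤ ‖T‖ * ‖x‖ ^ 2 :=
  calc RCLike.re ⟪T x, x⟫_𝕜 ≤ ‖T x‖ * ‖x‖ := re_inner_le_norm _ _
    _ ≤ ‖T‖ * ‖x‖ * ‖x‖ := by gcongr; exact T.le_opNorm x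
    _ = ‖T‖ * ‖x‖ ^ 2 := by ring

theorem norm_inner_adjoint_comp_comp_le [CompleteSpace G] {K L : Type*}
    [NormedAddCommGroup K] [InnerProductSpace 𝕜 K]
    [NormedAddCommGroup L] [InnerProductSpace 𝕜 L] [CompleteSpace L]
    (a : G →L[𝕜] L) (b : K →L[𝕜] L) (c : E →L[𝕜] K) (x : E) (y : G) :
    ‖⟪(adjoint a ∘L b ∘L c) x, y⟫_𝕜‖ ≤ ‖b‖ * (‖c x‖ * ‖a y‖) :=
  calc ‖⟪(adjoint a ∘L b ∘L c) x, y⟫_𝕜‖ = ‖⟪b (c x), a y⟫_𝕜‖ := by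
        simp only [comp_apply, adjoint_inner_left]
    _ ≤ ‖b (c x)‖ * ‖a y‖ := norm_inner_le_norm _ _
    _ ≤ ‖b‖ * ‖c x‖ * ‖a y‖ := by gcongr; exact b.le_opNorm _
    _ = ‖b‖ * (‖c x‖ * ‖a y‖) := mul_assoc _ _ _

variable [CompleteSpace E] {ι : Type*} {K L : ι → Type*}
  [∀ i, NormedAddCommGroup (K i)] [∀ i, InnerProductSpace 𝕜 (K i)] [∀ i, CompleteSpace (K i)]

theorem re_inner_sum_adjoint_comp_self (s : Finset ι) (c : ∀ i, E →L[𝕜] K i) (x : E) :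
    RCLike.re ⟪(∑ i ∈ s, adjoint (c i) ∘L c i) x, x⟫_𝕜 = ∑ i ∈ s, ‖c i x‖ ^ 2 := by
  simp only [sum_apply, sum_inner, map_sum, apply_norm_sq_eq_inner_adjoint_left]

variable [CompleteSpace G]
  [∀ i, NormedAddCommGroup (L i)] [∀ i, InnerProductSpace 𝕜 (L i)] [∀ i, CompleteSpace (L i)]
  (s : Finset ι) (a : ∀ i, G →L[𝕜] L i) (b : ∀ i, K i →L[𝕜] L i) (c : ∀ i, E →L[𝕜] K i)
  {ε : ℝ}

theorem norm_inner_sum_adjoint_comp_comp_le (hε : 0 ≤ ε) (hb : ∀ i ∈ s, ‖b i‖ ≤ ε)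
    (x : E) (y : G) :
    ‖⟪(∑ i ∈ s, adjoint (a i) ∘L b i ∘L c i) x, y⟫_𝕜‖ ≤
      ε * √(RCLike.re ⟪(∑ i ∈ s, adjoint (c i) ∘L c i) x, x⟫_𝕜)
        * √(RCLike.re ⟪(∑ i ∈ s, adjoint (a i) ∘L a i) y, y⟫_𝕜) := by
  rw [re_inner_sum_adjoint_comp_self, re_inner_sum_adjoint_comp_self, sum_apply, sum_inner]
  calc ‖∑ i ∈ s, ⟪(adjoint (a i) ∘L b i ∘L c i) x, y⟫_𝕜‖
    _ ≤ ∑ i ∈ s, ‖b i‖ * (‖c i x‖ * ‖a i y‖) :=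
        norm_sum_le_of_le _ fun i _ ↦ norm_inner_adjoint_comp_comp_le _ _ _ _ _
    _ ≤ ∑ i ∈ s, ε * (‖c i x‖ * ‖a i y‖) := by gcongr with i hi; exact hb i hi
    _ = ε * ∑ i ∈ s, ‖c i x‖ * ‖a i y‖ := (Finset.mul_sum _ _ _).symm
    _ ≤ ε * (√(∑ i ∈ s, ‖c i x‖ ^ 2) * √(∑ i ∈ s, ‖a i y‖ ^ 2)) := by
        gcongr; exact Real.sum_mul_le_sqrt_mul_sqrt _ _ _
    _ = ε * √(∑ i ∈ s, ‖c i x‖ ^ 2) * √(∑ i ∈ s, ‖a i y‖ ^ 2) := (mul_assoc _ _ _).symm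

theorem opNorm_sum_adjoint_comp_comp_le (hε : 0 ≤ ε) (hb : ∀ i ∈ s, ‖b i‖ ≤ ε) :
    ‖∑ i ∈ s, adjoint (a i) ∘L b i ∘L c i‖ ≤
      ε * √‖∑ i ∈ s, adjoint (c i) ∘L c i‖ * √‖∑ i ∈ s, adjoint (a i) ∘L a i‖ := by
  refine opNorm_le_of_re_inner_le (𝕜 := 𝕜) (by positivity) fun x y hx hy ↦ ?_
  have hcx : RCLike.re ⟪(∑ i ∈ s, adjoint (c i) ∘L c i) x, x⟫_𝕜 ≤
      ‖∑ i ∈ s, adjoint (c i) ∘L c i‖ := by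
    simpa only [hx, one_pow, mul_one] using re_inner_map_self_le (∑ i ∈ s, adjoint (c i) ∘L c i) x
  have hay : RCLike.re ⟪(∑ i ∈ s, adjoint (a i) ∘L a i) y, y⟫_𝕜 ≤
      ‖∑ i ∈ s, adjoint (a i) ∘L a i‖ := by
    simpa only [hy, one_pow, mul_one] using re_inner_map_self_le (∑ i ∈ s, adjoint (a i) ∘L a i) y
  calc RCLike.re ⟪(∑ i ∈ s, adjoint (a i) ∘L b i ∘L c i) x, y⟫_𝕜
    _ ≤ ‖⟪(∑ i ∈ s, adjoint (a i) ∘L b i ∘L c i) x, y⟫_𝕜‖ := RCLike.re_le_norm _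
    _ ≤ ε * √(RCLike.re ⟪(∑ i ∈ s, adjoint (c i) ∘L c i) x, x⟫_𝕜)
          * √(RCLike.re ⟪(∑ i ∈ s, adjoint (a i) ∘L a i) y, y⟫_𝕜) :=
        norm_inner_sum_adjoint_comp_comp_le s a b c hε hb x y
    _ ≤ ε * √‖∑ i ∈ s, adjoint (c i) ∘L c i‖ * √‖∑ i ∈ s, adjoint (a i) ∘L a i‖ := by gcongr

theorem stmt_9_general (hε : 0 ≤ ε) (hb : ∀ i ∈ s, ‖b i‖ ≤ ε) :
    (∀ (ξ : E) (η : G),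
      ‖⟪(∑ i ∈ s, adjoint (a i) ∘L b i ∘L c i) ξ, η⟫_𝕜‖ ≤
        ε * √(RCLike.re ⟪(∑ i ∈ s, adjoint (c i) ∘L c i) ξ, ξ⟫_𝕜)
          * √(RCLike.re ⟪(∑ i ∈ s, adjoint (a i) ∘L a i) η, η⟫_𝕜)) ∧
    ‖∑ i ∈ s, adjoint (a i) ∘L b i ∘L c i‖ ≤
      ε * ‖∑ i ∈ s, adjoint (c i) ∘L c i‖ ^ ((1 : ℝ) / 2)
        * ‖∑ i ∈ s, adjoint (a i) ∘L a i‖ ^ ((1 : ℝ) / 2) := by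
  refine ⟨norm_inner_sum_adjoint_comp_comp_le s a b c hε hb, ?_⟩
  simpa only [Real.sqrt_eq_rpow] using opNorm_sum_adjoint_comp_comp_le s a b c hε hb

end

theorem stmt_9 {H : Type*} [NormedAddCommGroup H] [InnerProductSpace ℂ H]
    [CompleteSpace H] {F : Type*} [Fintype F]
    (a b c : F → (H →L[ℂ] H)) (ε : ℝ) (hε : 0 ≤ ε)
    (hb : ∀ p : F, ‖b p‖ ≤ ε) :
    (∀ ξ η : H,
      ‖⟪(∑ p : F, (ContinuousLinearMap.adjoint (a p)) ∘L (b p) ∘L (c p)) ξ, η⟫_ℂ‖ ≤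
        ε * Real.sqrt (⟪(∑ p : F, (ContinuousLinearMap.adjoint (c p)) ∘L (c p)) ξ, ξ⟫_ℂ).re
          * Real.sqrt (⟪(∑ p : F, (ContinuousLinearMap.adjoint (a p)) ∘L (a p)) η, η⟫_ℂ).re) ∧
    ‖∑ p : F, (ContinuousLinearMap.adjoint (a p)) ∘L (b p) ∘L (c p)‖ ≤
      ε * ‖∑ p : F, (ContinuousLinearMap.adjoint (c p)) ∘L (c p)‖ ^ ((1 : ℝ) / 2)
        * ‖∑ p : F, (ContinuousLinearMap.adjoint (a p)) ∘L (a p)‖ ^ ((1 : ℝ) / 2) :=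
  stmt_9_general Finset.univ a b c hε fun p _ ↦ hb p
end

section
/- Let X be a type, H and K complex Hilbert spaces, V, W : X → (H →L K) families of operators whose norms are bounded above, and m : X × X → B(K) with (x,y) ↦ ‖m(x,y)‖² summable. Set k(x,y) := (V(x))* ∘ m(x,y) ∘ W(y) for x, y ∈ X. Suppose T_m is a bounded operator on ℓ²(X,K) with (T_m ζ)(x) = ∑'_y m(x,y)(ζ(y)), T_k is a bounded operator on ℓ²(X,H) with (T_k ξ)(x) = ∑'_y k(x,y)(ξ(y)), and D_V, D_W : ℓ²(X,H) → ℓ²(X,K) are bounded operators with (D_V ξ)(x) = V(x)(ξ(x)) and (D_W ξ)(x) = W(x)(ξ(x)). Then T_k = (D_V)* ∘ T_m ∘ D_W, and consequently ‖T_k‖ ≤ (⨆_x ‖V(x)‖) · (⨆_y ‖W(y)‖) · ‖T_m‖. -/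
/-!
Everything is read off the vectors `lp.single p y a`. A bounded operator `T` on `ℓᵖ` (`p < ∞`) with
matrix `m` sends such a vector to the column `x ↦ m x y a`. Since `ζ = ∑ y, lp.single p y (ζ y)` in
norm, the series `∑ y, m x y (ζ y)` converges for every `ζ`, so each `(V x)*` can be pulled through
it. Similarly the diagonal operator `D` of `V` satisfies `‖D (lp.single p x a)‖ = ‖V x a‖`, which
gives `‖D‖ = ⨆ x, ‖V x‖`.
-/

open scoped ENNReal InnerProductSpace

section Normed

variable {𝕜 X Y : Type*} [NontriviallyNormedField 𝕜] {p q r : ℝ≥0∞}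
  {E : X → Type*} [∀ x, NormedAddCommGroup (E x)] [∀ x, NormedSpace 𝕜 (E x)]
  {F : X → Type*} [∀ x, NormedAddCommGroup (F x)] [∀ x, NormedSpace 𝕜 (F x)]
  {G : Y → Type*} [∀ y, NormedAddCommGroup (G y)] [∀ y, NormedSpace 𝕜 (G y)]
  {G' : Y → Type*} [∀ y, NormedAddCommGroup (G' y)] [∀ y, NormedSpace 𝕜 (G' y)]
  [Fact (1 ≤ p)] [Fact (1 ≤ q)] [Fact (1 ≤ r)]

/-- `D` is the diagonal operator with entries `V x`, acting coordinatewise. For `p = q` it is the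
`lp.mapCLM` of `V`; a predicate lets us speak of a given `D` without choosing a bound on `V`. -/
def IsLpDiagonal (V : ∀ x, E x →L[𝕜] F x) (D : lp E p →L[𝕜] lp F q) : Prop :=
  ∀ ξ x, D ξ x = V x (ξ x)

/-- `T` is the operator with matrix (kernel) `m`. The `tsum` would be `0` if it diverged, but for
`p ≠ ∞` it always converges: see `HasLpMatrix.hasSum_apply`. -/
def HasLpMatrix (m : ∀ x y, G y →L[𝕜] E x) (T : lp G p →L[𝕜] lp E q) : Prop :=
  ∀ ζ x, T ζ x = ∑' y, m x y (ζ y)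

namespace IsLpDiagonal

variable {V : ∀ x, E x →L[𝕜] F x}

theorem map_single [DecidableEq X] {D : lp E p →L[𝕜] lp F q} (hD : IsLpDiagonal V D)
    (x : X) (a : E x) : D (lp.single p x a) = lp.single q x (V x a) := by
  ext y
  rw [hD, lp.single_apply, lp.single_apply]
  exact Pi.apply_single (fun y => V y) (fun y => map_zero (V y)) x a y

theorem norm_entry_le {D : lp E p →L[𝕜] lp F q} (hD : IsLpDiagonal V D) (x : X) :
    ‖V x‖ ≤ ‖D‖ := by
  classical
  have hp : 0 < p := zero_lt_one.trans_le Fact.out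
  have hq : 0 < q := zero_lt_one.trans_le Fact.out
  refine (V x).opNorm_le_bound (norm_nonneg D) fun a => ?_
  simpa only [hD.map_single, lp.norm_single hp, lp.norm_single hq] using
    D.le_opNorm (lp.single p x a)

theorem norm_eq_iSup {D : lp E p →L[𝕜] lp F p} (hD : IsLpDiagonal V D) :
    ‖D‖ = ⨆ x, ‖V x‖ := by
  have hV : ∀ x, ‖V x‖ ≤ ⨆ x, ‖V x‖ :=
    le_ciSup ⟨‖D‖, Set.forall_mem_range.2 hD.norm_entry_le⟩
  have hV₀ : 0 ≤ ⨆ x, ‖V x‖ := Real.iSup_nonneg fun x => norm_nonneg (V x)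
  have hD_eq : D = lp.mapCLM p V hV₀ hV := by
    ext ξ x
    exact hD ξ x
  refine le_antisymm ?_ (Real.iSup_le hD.norm_entry_le (norm_nonneg D))
  exact hD_eq ▸ lp.norm_mapCLM_le p V hV₀ hV

end IsLpDiagonal

namespace HasLpMatrix

variable {m : ∀ x y, G y →L[𝕜] E x} {T : lp G p →L[𝕜] lp E q}

theorem unique {S : lp G p →L[𝕜] lp E q} (hS : HasLpMatrix m S) (hT : HasLpMatrix m T) :
    S = T := by
  ext ζ x
  rw [hS, hT]

theorem map_single_apply [DecidableEq Y] (hT : HasLpMatrix m T) (y : Y) (a : G y) (x : X) :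
    T (lp.single p y a) x = m x y a := by
  rw [hT, tsum_eq_single y fun z hz => by rw [lp.single_apply_ne p y a hz, map_zero],
    lp.single_apply_self]

theorem hasSum_apply (hT : HasLpMatrix m T) (hp : p ≠ ∞) (ζ : lp G p) (x : X) :
    HasSum (fun y => m x y (ζ y)) (T ζ x) := by
  classical
  simp only [← hT.map_single_apply]
  exact (lp.hasSum_single hp ζ).mapL (lp.evalCLM 𝕜 E q x ∘L T)

theorem comp_diagonal (hT : HasLpMatrix m T) {W : ∀ y, G' y →L[𝕜] G y}
    {D : lp G' r →L[𝕜] lp G p} (hD : IsLpDiagonal W D) :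
    HasLpMatrix (fun x y => m x y ∘L W y) (T ∘L D) := fun ξ x => by
  simp only [ContinuousLinearMap.comp_apply, hT (D ξ), hD ξ]

theorem diagonal_comp (hT : HasLpMatrix m T) (hp : p ≠ ∞) {V : ∀ x, E x →L[𝕜] F x}
    {D : lp E q →L[𝕜] lp F r} (hD : IsLpDiagonal V D) :
    HasLpMatrix (fun x y => V x ∘L m x y) (D ∘L T) := fun ζ x => by
  rw [ContinuousLinearMap.comp_apply, hD]
  exact ((hT.hasSum_apply hp ζ x).mapL (V x)).tsum_eq.symm

end HasLpMatrix

end Normed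

section Hilbert

variable {𝕜 X Y : Type*} [RCLike 𝕜]
  {E : X → Type*} [∀ x, NormedAddCommGroup (E x)] [∀ x, InnerProductSpace 𝕜 (E x)]
  [∀ x, CompleteSpace (E x)]
  {F : X → Type*} [∀ x, NormedAddCommGroup (F x)] [∀ x, InnerProductSpace 𝕜 (F x)]
  [∀ x, CompleteSpace (F x)]
  {V : ∀ x, E x →L[𝕜] F x} {DV : lp E 2 →L[𝕜] lp F 2}

theorem IsLpDiagonal.adjoint (hDV : IsLpDiagonal V DV) :
    IsLpDiagonal (fun x => (V x).adjoint) DV.adjoint := fun η x => by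
  classical
  refine ext_inner_left 𝕜 fun a => ?_
  calc ⟪a, DV.adjoint η x⟫_𝕜
      = ⟪lp.single 2 x a, DV.adjoint η⟫_𝕜 := (lp.inner_single_left x a _).symm
    _ = ⟪lp.single 2 x (V x a), η⟫_𝕜 := by
        rw [ContinuousLinearMap.adjoint_inner_right, hDV.map_single]
    _ = ⟪V x a, η x⟫_𝕜 := lp.inner_single_left x (V x a) η
    _ = ⟪a, (V x).adjoint (η x)⟫_𝕜 := ((V x).adjoint_inner_right a (η x)).symm

theorem stmt_10_general
    {G : Y → Type*} [∀ y, NormedAddCommGroup (G y)] [∀ y, NormedSpace 𝕜 (G y)]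
    {G' : Y → Type*} [∀ y, NormedAddCommGroup (G' y)] [∀ y, NormedSpace 𝕜 (G' y)]
    {p : ℝ≥0∞} [Fact (1 ≤ p)] (hp : p ≠ ∞)
    {W : ∀ y, G' y →L[𝕜] G y} {m : ∀ x y, G y →L[𝕜] F x}
    {Tm : lp G p →L[𝕜] lp F 2} {Tk : lp G' p →L[𝕜] lp E 2} {DW : lp G' p →L[𝕜] lp G p}
    (hTm : HasLpMatrix m Tm)
    (hTk : HasLpMatrix (fun x y => (V x).adjoint ∘L m x y ∘L W y) Tk)
    (hDV : IsLpDiagonal V DV) (hDW : IsLpDiagonal W DW) :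
    Tk = DV.adjoint ∘L Tm ∘L DW ∧ ‖Tk‖ ≤ (⨆ x, ‖V x‖) * (⨆ y, ‖W y‖) * ‖Tm‖ := by
  have factorization : Tk = DV.adjoint ∘L Tm ∘L DW :=
    hTk.unique ((hTm.comp_diagonal hDW).diagonal_comp hp hDV.adjoint)
  refine ⟨factorization, ?_⟩
  calc ‖Tk‖ ≤ ‖DV.adjoint‖ * ‖Tm ∘L DW‖ := factorization ▸ DV.adjoint.opNorm_comp_le _
    _ ≤ ‖DV.adjoint‖ * (‖Tm‖ * ‖DW‖) := by gcongr; exact Tm.opNorm_comp_le DW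
    _ = (⨆ x, ‖V x‖) * (⨆ y, ‖W y‖) * ‖Tm‖ := by
        rw [LinearIsometryEquiv.norm_map, hDV.norm_eq_iSup, hDW.norm_eq_iSup]
        ring

end Hilbert

theorem stmt_10 {X : Type*} {H K : Type*}
    [NormedAddCommGroup H] [InnerProductSpace ℂ H] [CompleteSpace H]
    [NormedAddCommGroup K] [InnerProductSpace ℂ K] [CompleteSpace K]
    (V W : X → (H →L[ℂ] K))
    (hV : BddAbove (Set.range fun x : X => ‖V x‖))
    (hW : BddAbove (Set.range fun x : X => ‖W x‖))
    (m : X × X → (K →L[ℂ] K))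
    (hm : Summable fun p : X × X => ‖m p‖ ^ 2)
    (k : X × X → (H →L[ℂ] H))
    (hk : ∀ x y : X,
      k (x, y) = (ContinuousLinearMap.adjoint (V x)) ∘L (m (x, y)) ∘L (W y))
    (Tm : lp (fun _ : X => K) 2 →L[ℂ] lp (fun _ : X => K) 2)
    (hTm : ∀ (ζ : lp (fun _ : X => K) 2) (x : X),
      (Tm ζ : ∀ _ : X, K) x = ∑' y : X, m (x, y) (ζ y))
    (Tk : lp (fun _ : X => H) 2 →L[ℂ] lp (fun _ : X => H) 2)
    (hTk : ∀ (ξ : lp (fun _ : X => H) 2) (x : X),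
      (Tk ξ : ∀ _ : X, H) x = ∑' y : X, k (x, y) (ξ y))
    (DV DW : lp (fun _ : X => H) 2 →L[ℂ] lp (fun _ : X => K) 2)
    (hDV : ∀ (ξ : lp (fun _ : X => H) 2) (x : X), (DV ξ : ∀ _ : X, K) x = V x (ξ x))
    (hDW : ∀ (ξ : lp (fun _ : X => H) 2) (x : X), (DW ξ : ∀ _ : X, K) x = W x (ξ x)) :
    Tk = (ContinuousLinearMap.adjoint DV) ∘L Tm ∘L DW ∧
      ‖Tk‖ ≤ (⨆ x : X, ‖V x‖) * (⨆ y : X, ‖W y‖) * ‖Tm‖ := by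
  obtain rfl : k = fun z => (V z.1).adjoint ∘L m z ∘L W z.2 := funext fun z => hk z.1 z.2
  exact stmt_10_general ENNReal.ofNat_ne_top hTm hTk hDV hDW
end

section
/- Let d be a natural number and for k = 1,…,d let p_k, q_k ∈ G, ξ_k, η_k ∈ H, and y_k ∈ B(ℓ²(G,H)). Define θ : B(ℓ²(G,H)) → B(ℓ²(G,H)) by θ(x) = ∑_{k=1}^d ⟪x(δ_{p_k} ⊗ ξ_k), δ_{q_k} ⊗ η_k⟫ • y_k. Then for every a ∈ A and r ∈ G such that r ≠ q_k · p_k⁻¹ for all k = 1,…,d, one has θ(π(a) ∘ λ_r) = 0. -/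
open scoped InnerProductSpace

/-!
The operator `π(a) λ_r` is a weighted permutation: `λ_r` moves `δ_p ⊗ ξ` to `δ_{rp} ⊗ ξ`, and `π(a)`
acts fibrewise. Its matrix coefficient at `(p, q)` therefore vanishes unless `r p = q`.
-/

section SingleInLp

open scoped ENNReal

variable {X Y : Type*} [DecidableEq X] [DecidableEq Y] {p : ℝ≥0∞}

theorem reindex_lpSingle {H : Type*} [NormedAddCommGroup H]
    {L : lp (fun _ : X => H) p → lp (fun _ : Y => H) p} {σ : X ≃ Y}
    (hL : ∀ f y, L f y = f (σ.symm y)) (x : X) (ξ : H) :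
    L (lp.single p x ξ) = lp.single p (σ x) ξ := by
  ext y
  simp [hL, Pi.single_apply, Equiv.symm_apply_eq]

theorem diagonal_lpSingle {E F : X → Type*} [∀ x, NormedAddCommGroup (E x)]
    [∀ x, NormedAddCommGroup (F x)] {T : lp E p → lp F p} {D : ∀ x, ZeroHom (E x) (F x)}
    (hT : ∀ f x, T f x = D x (f x)) (x : X) (ξ : E x) :
    T (lp.single p x ξ) = lp.single p x (D x ξ) := by
  ext y
  simp only [hT, lp.coeFn_single]
  exact Pi.apply_single (fun x => D x) (fun x => map_zero (D x)) x ξ y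

end SingleInLp

section WeightedPermutation

variable {𝕜 X Y H K : Type*} [RCLike 𝕜] [DecidableEq X] [DecidableEq Y]
  [NormedAddCommGroup H] [NormedAddCommGroup K] [InnerProductSpace 𝕜 K]

theorem inner_diagonal_reindex_lpSingle
    {L : lp (fun _ : X => H) 2 → lp (fun _ : Y => H) 2} {σ : X ≃ Y}
    (hL : ∀ f y, L f y = f (σ.symm y))
    {T : lp (fun _ : Y => H) 2 → lp (fun _ : Y => K) 2} {D : Y → ZeroHom H K}
    (hT : ∀ f y, T f y = D y (f y)) (x : X) (y : Y) (ξ : H) (η : K) :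
    ⟪T (L (lp.single 2 x ξ)), lp.single 2 y η⟫_𝕜 = if σ x = y then ⟪D y ξ, η⟫_𝕜 else 0 := by
  rw [reindex_lpSingle hL, diagonal_lpSingle hT, lp.inner_single_right]
  split_ifs with h
  · rw [h, lp.single_apply_self]
  · rw [lp.single_apply_ne _ _ _ (Ne.symm h), inner_zero_left]

theorem stmt_12_general [InnerProductSpace 𝕜 H]
    {L : lp (fun _ : X => H) 2 →L[𝕜] lp (fun _ : Y => H) 2} {σ : X ≃ Y}
    (hL : ∀ f y, L f y = f (σ.symm y))
    {T : lp (fun _ : Y => H) 2 →L[𝕜] lp (fun _ : Y => K) 2} {D : Y → H →L[𝕜] K}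
    (hT : ∀ f y, T f y = D y (f y))
    {V : Type*} [AddCommMonoid V] [Module 𝕜 V] {ι : Type*} [Fintype ι]
    {p : ι → X} {q : ι → Y} {ξ : ι → H} {η : ι → K} {v : ι → V}
    {θ : (lp (fun _ : X => H) 2 →L[𝕜] lp (fun _ : Y => K) 2) → V}
    (hθ : ∀ x, θ x = ∑ k, ⟪x (lp.single 2 (p k) (ξ k)), lp.single 2 (q k) (η k)⟫_𝕜 • v k)
    (hpq : ∀ k, σ (p k) ≠ q k) :
    θ (T ∘L L) = 0 := by
  rw [hθ]
  refine Finset.sum_eq_zero fun k _ => ?_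
  rw [ContinuousLinearMap.comp_apply,
    inner_diagonal_reindex_lpSingle hL (D := fun y => (D y : ZeroHom H K)) hT,
    if_neg (hpq k), zero_smul]

end WeightedPermutation

theorem stmt_12 {G : Type*} [Group G] [DecidableEq G] {H : Type*} [NormedAddCommGroup H]
    [InnerProductSpace ℂ H] [CompleteSpace H]
    {A : Type*} [NormedRing A] [StarRing A] [CStarRing A] [NormedAlgebra ℂ A]
    [StarModule ℂ A] [CompleteSpace A]
    (u : A →⋆ₐ[ℂ] (H →L[ℂ] H)) (α : G → (A ≃⋆ₐ[ℂ] A))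
    (hα : ∀ (g h : G) (a : A), α (g * h) a = α g (α h a))
    (lam : G → (lp (fun _ : G => H) 2 →L[ℂ] lp (fun _ : G => H) 2))
    (hlam : ∀ (r : G) (ξ : lp (fun _ : G => H) 2) (s : G),
      (lam r ξ : ∀ _ : G, H) s = ξ (r⁻¹ * s))
    (π : A → (lp (fun _ : G => H) 2 →L[ℂ] lp (fun _ : G => H) 2))
    (hπ : ∀ (a : A) (ξ : lp (fun _ : G => H) 2) (s : G),
      (π a ξ : ∀ _ : G, H) s = u (α s⁻¹ a) (ξ s))
    (d : ℕ) (p q : Fin d → G) (ξ η : Fin d → H)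
    (y : Fin d → (lp (fun _ : G => H) 2 →L[ℂ] lp (fun _ : G => H) 2))
    (θ : (lp (fun _ : G => H) 2 →L[ℂ] lp (fun _ : G => H) 2) →
          (lp (fun _ : G => H) 2 →L[ℂ] lp (fun _ : G => H) 2))
    (hθ : ∀ x : lp (fun _ : G => H) 2 →L[ℂ] lp (fun _ : G => H) 2,
      θ x = ∑ k : Fin d,
        ⟪x (lp.single 2 (p k) (ξ k)), lp.single 2 (q k) (η k)⟫_ℂ • y k) :
    ∀ (a : A) (r : G), (∀ k : Fin d, r ≠ q k * (p k)⁻¹) →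
      θ (π a ∘L lam r) = 0 := by
  intro a r hr
  refine stmt_12_general (σ := Equiv.mulLeft r) (hlam r) (hπ a) hθ fun k hk => hr k ?_
  exact eq_mul_inv_of_mul_eq hk
end

section
/- Assume u is injective (so that u, and hence π, is isometric). Let a : G → A and v : G → ℂ be finitely supported functions and Φ : A → A a bounded linear map. Then ‖∑_{s ∈ supp v} v(s) • (π(Φ(a(s))) ∘ λ_s)‖ ≤ (⨆_{s} |v(s)|) · ‖Φ‖ · (supp v).card · ‖∑_{s ∈ supp a} π(a(s)) ∘ λ_s‖. -/
/-!
Apply `T = ∑ s, π (a s) ∘ λ s` to a vector `x` concentrated at `1`: the translates `λ s (δ₁ ⊗ x)`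
are supported at distinct points, so the value of `T (δ₁ ⊗ x)` at `s` is the image of `x` under the
single entry `u (α s⁻¹ (a s))`. Hence `‖a s‖ ≤ ‖T‖` for each `s`, because `u` and `α s⁻¹` are
isometric. The triangle inequality and `‖π b‖ ≤ ‖b‖`, `‖λ s‖ ≤ 1` then bound the multiplied sum.
-/

open scoped ENNReal

theorem lp_norm_eq_of_apply_eq_comp_equiv {ι κ E : Type*} [NormedAddCommGroup E] {p : ℝ≥0∞}
    (e : κ ≃ ι) {ξ : lp (fun _ : ι ↦ E) p} {η : lp (fun _ : κ ↦ E) p}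
    (h : ∀ k, η k = ξ (e k)) : ‖η‖ = ‖ξ‖ := by
  rcases p.trichotomy with rfl | rfl | hp
  · rw [lp.norm_eq_card_dsupport, lp.norm_eq_card_dsupport, Nat.cast_inj]
    refine Finset.card_equiv e fun k ↦ ?_
    simp only [Set.Finite.mem_toFinset, Set.mem_ofPred_eq, h]
  · rw [lp.norm_eq_ciSup, lp.norm_eq_ciSup]
    exact e.iSup_congr fun k ↦ by rw [h]
  · rw [lp.norm_eq_tsum_rpow hp, lp.norm_eq_tsum_rpow hp]
    simp only [h]
    rw [e.tsum_eq fun i ↦ ‖ξ i‖ ^ p.toReal]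

theorem lp_norm_le_mul_of_forall_norm_apply_le {ι : Type*} {E F : ι → Type*}
    [∀ i, NormedAddCommGroup (E i)] [∀ i, NormedAddCommGroup (F i)] {p : ℝ≥0∞} (hp : p ≠ 0)
    {ξ : lp E p} {η : lp F p} {C : ℝ} (hC : 0 ≤ C) (h : ∀ i, ‖η i‖ ≤ C * ‖ξ i‖) :
    ‖η‖ ≤ C * ‖ξ‖ :=
  calc
    ‖η‖ ≤ ‖C • lp.toNorm ξ‖ := lp.norm_mono hp fun i ↦ by
      simpa [lp.toNorm, abs_of_nonneg hC] using h i
    _ = C * ‖ξ‖ := by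
      rw [lp.norm_const_smul hp, Real.norm_of_nonneg hC, lp.norm_toNorm]

theorem sum_support_norm_le_iSup_norm_mul_card {ι E : Type*} [SeminormedAddCommGroup E]
    (v : ι →₀ E) :
    ∑ i ∈ v.support, ‖v i‖ ≤ (⨆ i, ‖v i‖) * v.support.card := by
  have bddAbove_norm : BddAbove (Set.range fun i ↦ ‖v i‖) :=
    (v.finite_range.image norm).bddAbove.mono (Set.range_comp norm v).subset
  calc
    ∑ i ∈ v.support, ‖v i‖ ≤ v.support.card • ⨆ i, ‖v i‖ :=
      Finset.sum_le_card_nsmul _ _ _ fun i _ ↦ le_ciSup bddAbove_norm i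
    _ = (⨆ i, ‖v i‖) * v.support.card := by rw [nsmul_eq_mul, mul_comm]

theorem norm_starAlgHom_comp_starAlgEquiv_apply {A B C : Type*} [CStarAlgebra A] [CStarAlgebra B]
    [CStarAlgebra C] (u : B →⋆ₐ[ℂ] C) (hu : Function.Injective u) (α : A ≃⋆ₐ[ℂ] B) (b : A) :
    ‖u (α b)‖ = ‖b‖ := by
  rw [NonUnitalStarAlgHom.norm_map u hu, StarAlgEquiv.norm_map α]

section Operators

variable {𝕜 G H A : Type*} [NontriviallyNormedField 𝕜] [NormedAddCommGroup H] [NormedSpace 𝕜 H]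
  {p : ℝ≥0∞} [Fact (1 ≤ p)]

theorem opNorm_le_of_apply_eq_diagonal {ι : Type*} {E F : ι → Type*}
    [∀ i, NormedAddCommGroup (E i)] [∀ i, NormedSpace 𝕜 (E i)]
    [∀ i, NormedAddCommGroup (F i)] [∀ i, NormedSpace 𝕜 (F i)]
    {D : lp E p →L[𝕜] lp F p} {d : ∀ i, E i →L[𝕜] F i} (hD : ∀ ξ i, D ξ i = d i (ξ i))
    {C : ℝ} (hC : 0 ≤ C) (hd : ∀ i, ‖d i‖ ≤ C) : ‖D‖ ≤ C :=
  D.opNorm_le_bound hC fun ξ ↦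
    lp_norm_le_mul_of_forall_norm_apply_le (zero_lt_one.trans_le Fact.out).ne' hC fun i ↦ by
      rw [hD]
      exact (d i).le_of_opNorm_le (hd i) (ξ i)

variable [Group G]

theorem opNorm_le_one_of_apply_eq_leftTranslation
    {L : lp (fun _ : G ↦ H) p →L[𝕜] lp (fun _ : G ↦ H) p} {r : G}
    (hL : ∀ ξ s, L ξ s = ξ (r⁻¹ * s)) : ‖L‖ ≤ 1 :=
  L.opNorm_le_bound zero_le_one fun ξ ↦ by
    rw [one_mul, lp_norm_eq_of_apply_eq_comp_equiv (Equiv.mulLeft r⁻¹) (hL ξ)]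

section LeftRegular

variable {lam : G → lp (fun _ : G ↦ H) p →L[𝕜] lp (fun _ : G ↦ H) p}
  {D : G → lp (fun _ : G ↦ H) p →L[𝕜] lp (fun _ : G ↦ H) p} {d : G → G → H →L[𝕜] H}

theorem sum_diagonal_comp_leftRegular_apply_single_one [DecidableEq G]
    (hlam : ∀ r ξ s, lam r ξ s = ξ (r⁻¹ * s)) (hD : ∀ r ξ s, D r ξ s = d r s (ξ s))
    {S : Finset G} {t : G} (ht : t ∈ S) (x : H) :
    (∑ s ∈ S, D s ∘L lam s) (lp.single p 1 x) t = d t t x := by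
  rw [sum_apply, lp.coeFn_sum, Finset.sum_apply, Finset.sum_eq_single_of_mem t ht]
  · rw [ContinuousLinearMap.comp_apply, hD, hlam, inv_mul_cancel, lp.single_apply_self]
  · intro s _ hst
    rw [ContinuousLinearMap.comp_apply, hD, hlam,
      lp.single_apply_ne (E := fun _ ↦ H) p 1 x (mt inv_mul_eq_one.mp hst), map_zero]

theorem opNorm_entry_le_opNorm_sum_diagonal_comp_leftRegular
    (hlam : ∀ r ξ s, lam r ξ s = ξ (r⁻¹ * s)) (hD : ∀ r ξ s, D r ξ s = d r s (ξ s))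
    {S : Finset G} {t : G} (ht : t ∈ S) :
    ‖d t t‖ ≤ ‖∑ s ∈ S, D s ∘L lam s‖ := by
  classical
  have hp : 0 < p := zero_lt_one.trans_le Fact.out
  set T := ∑ s ∈ S, D s ∘L lam s with hT
  refine ContinuousLinearMap.opNorm_le_bound _ (norm_nonneg T) fun x ↦ ?_
  let δx : lp (fun _ : G ↦ H) p := lp.single p 1 x
  calc
    ‖d t t x‖ = ‖T δx t‖ := by
      rw [hT, sum_diagonal_comp_leftRegular_apply_single_one hlam hD ht]
    _ ≤ ‖T δx‖ := lp.norm_apply_le_norm hp.ne' _ t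
    _ ≤ ‖T‖ * ‖δx‖ := T.le_opNorm _
    _ = ‖T‖ * ‖x‖ := by rw [lp.norm_single hp]

variable [SeminormedAddCommGroup A] {ρ : G → A → H →L[𝕜] H}
  {π : A → lp (fun _ : G ↦ H) p →L[𝕜] lp (fun _ : G ↦ H) p}

theorem norm_coeff_le_opNorm_sum_comp_leftRegular (hρ : ∀ s b, ‖b‖ ≤ ‖ρ s b‖)
    (hlam : ∀ r ξ s, lam r ξ s = ξ (r⁻¹ * s)) (hπ : ∀ b ξ s, π b ξ s = ρ s b (ξ s))
    (a : G →₀ A) (t : G) : ‖a t‖ ≤ ‖∑ s ∈ a.support, π (a s) ∘L lam s‖ := by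
  by_cases ht : t ∈ a.support
  · exact (hρ t (a t)).trans <|
      opNorm_entry_le_opNorm_sum_diagonal_comp_leftRegular (d := fun r s ↦ ρ s (a r)) hlam
        (fun r ↦ hπ (a r)) ht
  · rw [Finsupp.notMem_support_iff.mp ht, norm_zero]
    exact norm_nonneg _

theorem opNorm_comp_leftRegular_le (hρ : ∀ s b, ‖ρ s b‖ ≤ ‖b‖)
    (hlam : ∀ r ξ s, lam r ξ s = ξ (r⁻¹ * s)) (hπ : ∀ b ξ s, π b ξ s = ρ s b (ξ s))
    (b : A) (r : G) : ‖π b ∘L lam r‖ ≤ ‖b‖ :=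
  calc
    ‖π b ∘L lam r‖ ≤ ‖π b‖ * ‖lam r‖ := ContinuousLinearMap.opNorm_comp_le _ _
    _ ≤ ‖b‖ * 1 := by
      gcongr
      · exact opNorm_le_of_apply_eq_diagonal (hπ b) (norm_nonneg b) fun s ↦ hρ s b
      · exact opNorm_le_one_of_apply_eq_leftTranslation (hlam r)
    _ = ‖b‖ := mul_one _

variable [NormedSpace 𝕜 A]

theorem opNorm_sum_smul_comp_leftRegular_le_sum_norm (hρ : ∀ s b, ‖ρ s b‖ = ‖b‖)
    (hlam : ∀ r ξ s, lam r ξ s = ξ (r⁻¹ * s)) (hπ : ∀ b ξ s, π b ξ s = ρ s b (ξ s))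
    (a : G →₀ A) (v : G → 𝕜) (S : Finset G) (Φ : A →L[𝕜] A) :
    ‖∑ s ∈ S, v s • (π (Φ (a s)) ∘L lam s)‖ ≤
      (∑ s ∈ S, ‖v s‖) * (‖Φ‖ * ‖∑ s ∈ a.support, π (a s) ∘L lam s‖) := by
  rw [Finset.sum_mul]
  refine norm_sum_le_of_le S fun s _ ↦ ?_
  calc
    ‖v s • (π (Φ (a s)) ∘L lam s)‖ = ‖v s‖ * ‖π (Φ (a s)) ∘L lam s‖ := norm_smul _ _
    _ ≤ ‖v s‖ * ‖Φ (a s)‖ := by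
      gcongr
      exact opNorm_comp_leftRegular_le (fun s b ↦ (hρ s b).le) hlam hπ _ s
    _ ≤ ‖v s‖ * (‖Φ‖ * ‖∑ s ∈ a.support, π (a s) ∘L lam s‖) := by
      gcongr
      exact Φ.le_opNorm_of_le <|
        norm_coeff_le_opNorm_sum_comp_leftRegular (fun s b ↦ (hρ s b).ge) hlam hπ a s

end LeftRegular

end Operators

theorem stmt_15_general {𝕜 G H A : Type*} [NontriviallyNormedField 𝕜] [Group G]
    [NormedAddCommGroup H] [NormedSpace 𝕜 H] [SeminormedAddCommGroup A] [NormedSpace 𝕜 A]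
    {p : ℝ≥0∞} [Fact (1 ≤ p)]
    {ρ : G → A → H →L[𝕜] H} (hρ : ∀ s b, ‖ρ s b‖ = ‖b‖)
    {lam : G → lp (fun _ : G ↦ H) p →L[𝕜] lp (fun _ : G ↦ H) p}
    (hlam : ∀ r ξ s, lam r ξ s = ξ (r⁻¹ * s))
    {π : A → lp (fun _ : G ↦ H) p →L[𝕜] lp (fun _ : G ↦ H) p}
    (hπ : ∀ b ξ s, π b ξ s = ρ s b (ξ s))
    (a : G →₀ A) (v : G →₀ 𝕜) (Φ : A →L[𝕜] A) :
    ‖∑ s ∈ v.support, v s • (π (Φ (a s)) ∘L lam s)‖ ≤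
      (⨆ s : G, ‖v s‖) * ‖Φ‖ * (v.support.card : ℝ) *
        ‖∑ s ∈ a.support, π (a s) ∘L lam s‖ := by
  set T := ∑ s ∈ a.support, π (a s) ∘L lam s
  calc
    ‖∑ s ∈ v.support, v s • (π (Φ (a s)) ∘L lam s)‖
      ≤ (∑ s ∈ v.support, ‖v s‖) * (‖Φ‖ * ‖T‖) :=
        opNorm_sum_smul_comp_leftRegular_le_sum_norm hρ hlam hπ a v v.support Φ
    _ ≤ ((⨆ s, ‖v s‖) * v.support.card) * (‖Φ‖ * ‖T‖) := by
      gcongr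
      exact sum_support_norm_le_iSup_norm_mul_card v
    _ = (⨆ s, ‖v s‖) * ‖Φ‖ * v.support.card * ‖T‖ := by ring

theorem stmt_15 {G : Type*} [Group G] {H : Type*} [NormedAddCommGroup H]
    [InnerProductSpace ℂ H] [CompleteSpace H]
    {A : Type*} [NormedRing A] [StarRing A] [CStarRing A] [NormedAlgebra ℂ A]
    [StarModule ℂ A] [CompleteSpace A]
    (u : A →⋆ₐ[ℂ] (H →L[ℂ] H)) (hu : Function.Injective u)
    (α : G → (A ≃⋆ₐ[ℂ] A))
    (hα : ∀ (g h : G) (a : A), α (g * h) a = α g (α h a))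
    (lam : G → (lp (fun _ : G => H) 2 →L[ℂ] lp (fun _ : G => H) 2))
    (hlam : ∀ (r : G) (ξ : lp (fun _ : G => H) 2) (s : G),
      (lam r ξ : ∀ _ : G, H) s = ξ (r⁻¹ * s))
    (π : A → (lp (fun _ : G => H) 2 →L[ℂ] lp (fun _ : G => H) 2))
    (hπ : ∀ (a : A) (ξ : lp (fun _ : G => H) 2) (s : G),
      (π a ξ : ∀ _ : G, H) s = u (α s⁻¹ a) (ξ s))
    (a : G →₀ A) (v : G →₀ ℂ) (Φ : A →L[ℂ] A) :
    ‖∑ s ∈ v.support, v s • (π (Φ (a s)) ∘L lam s)‖ ≤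
      (⨆ s : G, ‖v s‖) * ‖Φ‖ * (v.support.card : ℝ) *
        ‖∑ s ∈ a.support, π (a s) ∘L lam s‖ := by
  let : CStarAlgebra A := {}
  exact stmt_15_general (fun s ↦ norm_starAlgHom_comp_starAlgEquiv_apply u hu (α s⁻¹)) hlam hπ a v Φ
end
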